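/- arXiv:1902.05671 — 2 statements merged into one kernel-verified Lean document; each statement's English description precedes it below -/
import Mathlib

section
/- Let k ≥ 2, n ≥ 2, κ̄ = ⌈k/2⌉, L̄ = I_n ⊗ L_A^{(k)}, and 𝓛 = L̄ + Σ_{i=1}^{n−1} z_i z_iᵀ with z_i = e_{ik} − e_{ik+κ̄}. Then for every j ∈ {0, 1, …, k−1}: λ_{nj+1}(L̄) = λ_{nj+1}(𝓛) = λ_{nj+2}(L̄) < λ_{nj+2}(𝓛), where λ_i(M) denotes the i-th smallest eigenvalue of the symmetric matrix M (with multiplicity). In particular the common value of the first three quantities equals the (j+1)-th smallest eigenvalue of L_A^{(k)}. -/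
/-!
For a symmetric matrix `M` let `N_M(t)` be the number of its eigenvalues that are at most `t`.
Every eigenvalue of `L_A` is repeated `n` times in `L̄`, so `N_L̄ = n N_A`. The links add a
positive semidefinite matrix of rank at most `n - 1`, so `N_𝓛 ≤ N_L̄ ≤ N_𝓛 + (n - 1)` (Weyl); this
alone gives the equalities.

The strict inequality says that `N_𝓛(t)` exceeds the number of eigenvalues of `L̄` below `t` by at
most one. Consider the vectors `x` orthogonal to the eigenvectors of `L̄` with eigenvalue below `t`
and vanishing at the vertex `κ̄` of the first copy. On these `xᵀ 𝓛 x ≥ t xᵀ x`, with equality only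
if `L̄ x = t x` and every `z_i` is orthogonal to `x`. An eigenvector of `L_A` cannot vanish at
`κ̄`, so `x` vanishes on the first copy; the first link then makes it vanish at the vertex `κ̄` of
the second copy, hence on the second copy, and so on. Thus equality forces `x = 0`.

That no eigenvector of an antiregular graph vanishes at `κ̄` is shown by peeling off a dominating
and a pendant vertex, which turns `A_{k+2}` into `A_k`, lowers the eigenvalue by `1` and preserves
the middle vertex.
-/

/-- Laplacian matrix of the `k`-vertex antiregular graph (0-indexed vertices;
1-indexed vertices `i+1`, `j+1` adjacent iff `(i+1)+(j+1) ≤ k+1`). -/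
def antiregLap (k : ℕ) : Matrix (Fin k) (Fin k) ℝ :=
  Matrix.of fun i j =>
    if i = j then
      ((Finset.univ.filter fun m : Fin k => m ≠ i ∧ i.val + m.val + 2 ≤ k + 1).card : ℝ)
    else if i.val + j.val + 2 ≤ k + 1 then -1 else 0

/-- The vector `z_i = e_{ik} - e_{ik+κ̄}` (1-indexed, `κ̄ = ⌈k/2⌉`, `i = p+1`),
on the product index set: copy `p`, vertex `k` minus copy `p+1`, vertex `κ̄`. -/
def zvec (n k : ℕ) (hk : 2 ≤ k) (p : Fin (n - 1)) : Fin n × Fin k → ℝ :=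
  fun q =>
    (if q = (⟨p.val, by have := p.isLt; omega⟩, ⟨k - 1, by omega⟩) then (1 : ℝ) else 0) -
    (if q = (⟨p.val + 1, by have := p.isLt; omega⟩, ⟨(k + 1) / 2 - 1, by omega⟩) then 1 else 0)

/-- `L̄ = I_n ⊗ L_A^{(k)}`, the Laplacian of `n` disjoint copies of the
`k`-vertex antiregular graph, indexed by (copy, vertex). -/
def copiesLap (n k : ℕ) : Matrix (Fin n × Fin k) (Fin n × Fin k) ℝ :=
  Matrix.kroneckerMap (· * ·) (1 : Matrix (Fin n) (Fin n) ℝ) (antiregLap k)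

/-- `𝓛 = I_n ⊗ L_A^{(k)} + Σ_{i=1}^{n-1} z_i z_iᵀ`, the Laplacian of `n`
interconnected copies of the `k`-vertex antiregular graph. -/
def interLap (n k : ℕ) (hk : 2 ≤ k) : Matrix (Fin n × Fin k) (Fin n × Fin k) ℝ :=
  copiesLap n k + ∑ p : Fin (n - 1), Matrix.vecMulVec (zvec n k hk p) (zvec n k hk p)

open Matrix Kronecker

section SortedEnumeration

lemma apply_iff_lt_countP {α : Type*} [Preorder α] {f : ℕ → α} (hf : Monotone f) {p : α → Prop}
    [DecidablePred p] (hp : Antitone p) {i N : ℕ} (hi : i < N) :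
    p (f i) ↔ i < ((Multiset.range N).map f).countP p := by
  have hcount : ((Multiset.range N).map f).countP p = {j ∈ Finset.range N | p (f j)}.card :=
    Multiset.countP_map ..
  rw [hcount]
  constructor
  · intro h
    have hsub : Finset.range (i + 1) ⊆ {j ∈ Finset.range N | p (f j)} := fun j hj => by
      have hji : j ≤ i := Finset.mem_range_succ_iff.1 hj
      exact Finset.mem_filter.2 ⟨Finset.mem_range.2 (hji.trans_lt hi), hp (hf hji) h⟩
    simpa using Finset.card_le_card hsub
  · intro h
    by_contra hpi
    have hsub : {j ∈ Finset.range N | p (f j)} ⊆ Finset.range i := fun j hj =>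
      Finset.mem_range.2 <| lt_of_not_ge fun hij => hpi (hp (hf hij) (Finset.mem_filter.1 hj).2)
    exact absurd (Finset.card_le_card hsub) (by simpa using h)

lemma le_iff_lt_countP_le {α : Type*} [Preorder α] [DecidableLE α] {f : ℕ → α} (hf : Monotone f)
    {i N : ℕ} (hi : i < N) (t : α) :
    f i ≤ t ↔ i < ((Multiset.range N).map f).countP (· ≤ t) :=
  apply_iff_lt_countP hf (fun _ _ hab hb => hab.trans hb) hi

lemma lt_iff_lt_countP_lt {α : Type*} [Preorder α] [DecidableLT α] {f : ℕ → α} (hf : Monotone f)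
    {i N : ℕ} (hi : i < N) (t : α) :
    f i < t ↔ i < ((Multiset.range N).map f).countP (· < t) :=
  apply_iff_lt_countP hf (fun _ _ hab hb => hab.trans_lt hb) hi

lemma apply_eq_apply_div_of_map_range_eq_nsmul {α : Type*} [PartialOrder α] {f g : ℕ → α}
    (hf : Monotone f) (hg : Monotone g) {N k : ℕ}
    (h : (Multiset.range (N * k)).map f = N • (Multiset.range k).map g) {i : ℕ} (hi : i < N * k) :
    f i = g (i / N) := by
  classical
  refine eq_of_forall_ge_iff fun t => ?_
  have hN : 0 < N := Nat.pos_of_mul_pos_right (i.zero_le.trans_lt hi)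
  rw [le_iff_lt_countP_le hf hi, h, Multiset.countP_nsmul, mul_comm, ← Nat.div_lt_iff_lt_mul hN,
    ← le_iff_lt_countP_le hg (Nat.div_lt_of_lt_mul hi)]

end SortedEnumeration

section Rayleigh

variable {ι κ : Type*} [Fintype ι] [Fintype κ]

lemma dotProduct_eq_sum_dotProduct_mul (b : OrthonormalBasis κ ℝ (EuclideanSpace ℝ ι))
    (x y : ι → ℝ) :
    x ⬝ᵥ y = ∑ i, (b i ⬝ᵥ x) * (b i ⬝ᵥ y) := by
  have h := b.sum_inner_mul_inner (WithLp.toLp 2 x) (WithLp.toLp 2 y)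
  simp only [EuclideanSpace.inner_eq_star_dotProduct, star_trivial] at h
  rw [dotProduct_comm x, ← h]
  exact Finset.sum_congr rfl fun i _ => by rw [dotProduct_comm y]

lemma eq_zero_of_forall_dotProduct_eq_zero (b : OrthonormalBasis κ ℝ (EuclideanSpace ℝ ι))
    {x : ι → ℝ} (hx : ∀ i, b i ⬝ᵥ x = 0) : x = 0 := by
  rw [← dotProduct_self_eq_zero, dotProduct_eq_sum_dotProduct_mul b]
  simp [hx]

variable [DecidableEq ι] {A : Matrix ι ι ℝ} {t : ℝ} {x : ι → ℝ} (hA : A.IsHermitian)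

lemma eigenvectorBasis_dotProduct_mulVec (i : ι) (x : ι → ℝ) :
    hA.eigenvectorBasis i ⬝ᵥ (A *ᵥ x) = hA.eigenvalues i * (hA.eigenvectorBasis i ⬝ᵥ x) := by
  have hT : Aᵀ = A := hA.eq
  rw [dotProduct_mulVec, ← mulVec_transpose, hT, hA.mulVec_eigenvectorBasis, smul_dotProduct,
    smul_eq_mul]

lemma dotProduct_mulVec_sub_eq_sum (t : ℝ) (x : ι → ℝ) :
    x ⬝ᵥ (A *ᵥ x) - t * (x ⬝ᵥ x)
      = ∑ i, (hA.eigenvalues i - t) * (hA.eigenvectorBasis i ⬝ᵥ x) ^ 2 := by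
  simp only [dotProduct_eq_sum_dotProduct_mul hA.eigenvectorBasis x,
    eigenvectorBasis_dotProduct_mulVec, Finset.mul_sum, ← Finset.sum_sub_distrib]
  exact Finset.sum_congr rfl fun i _ => by ring

lemma mulVec_eq_smul_of_forall_ne
    (hx : ∀ i, hA.eigenvalues i ≠ t → hA.eigenvectorBasis i ⬝ᵥ x = 0) : A *ᵥ x = t • x := by
  refine sub_eq_zero.1 (eq_zero_of_forall_dotProduct_eq_zero hA.eigenvectorBasis fun i => ?_)
  rw [dotProduct_sub, eigenvectorBasis_dotProduct_mulVec, dotProduct_smul, smul_eq_mul, ← sub_mul]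
  rcases eq_or_ne (hA.eigenvalues i) t with h | h
  · rw [h, sub_self, zero_mul]
  · rw [hx i h, mul_zero]

lemma dotProduct_mulVec_le_of_forall_gt
    (hx : ∀ i, t < hA.eigenvalues i → hA.eigenvectorBasis i ⬝ᵥ x = 0) :
    x ⬝ᵥ (A *ᵥ x) ≤ t * (x ⬝ᵥ x) := by
  rw [← sub_nonpos, dotProduct_mulVec_sub_eq_sum hA]
  refine Finset.sum_nonpos fun i _ => ?_
  rcases le_or_gt (hA.eigenvalues i) t with h | h
  · exact mul_nonpos_of_nonpos_of_nonneg (sub_nonpos.2 h) (sq_nonneg _)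
  · simp [hx i h]

lemma lt_dotProduct_mulVec_or_mulVec_eq_smul
    (hx : ∀ i, hA.eigenvalues i < t → hA.eigenvectorBasis i ⬝ᵥ x = 0) :
    t * (x ⬝ᵥ x) < x ⬝ᵥ (A *ᵥ x) ∨ A *ᵥ x = t • x := by
  have hterm : ∀ i ∈ Finset.univ,
      0 ≤ (hA.eigenvalues i - t) * (hA.eigenvectorBasis i ⬝ᵥ x) ^ 2 := fun i _ => by
    rcases lt_or_ge (hA.eigenvalues i) t with h | h
    · simp [hx i h]
    · exact mul_nonneg (sub_nonneg.2 h) (sq_nonneg _)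
  rw [← sub_pos, dotProduct_mulVec_sub_eq_sum hA]
  refine (Finset.sum_nonneg hterm).lt_or_eq.imp_right fun hsum => ?_
  refine mulVec_eq_smul_of_forall_ne hA fun i hi => ?_
  have hzero := (Finset.sum_eq_zero_iff_of_nonneg hterm).1 hsum.symm i (Finset.mem_univ i)
  exact pow_eq_zero_iff two_ne_zero |>.1 ((mul_eq_zero.1 hzero).resolve_left (sub_ne_zero.2 hi))

lemma lt_dotProduct_mulVec_of_forall_le
    (hx : ∀ i, hA.eigenvalues i ≤ t → hA.eigenvectorBasis i ⬝ᵥ x = 0) (hx₀ : x ≠ 0) :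
    t * (x ⬝ᵥ x) < x ⬝ᵥ (A *ᵥ x) := by
  refine (lt_dotProduct_mulVec_or_mulVec_eq_smul hA fun i hi => hx i hi.le).resolve_right
    fun heig => hx₀ (eq_zero_of_forall_dotProduct_eq_zero hA.eigenvectorBasis fun i => ?_)
  rcases le_or_gt (hA.eigenvalues i) t with h | h
  · exact hx i h
  · have hi := eigenvectorBasis_dotProduct_mulVec hA i x
    rw [heig, dotProduct_smul, smul_eq_mul] at hi
    exact (mul_eq_mul_right_iff.1 hi).resolve_left h.ne

end Rayleigh

section EigenvalueCount

variable {ι P : Type*} [Fintype P]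

lemma isHermitian_add_sum_vecMulVec {A : Matrix ι ι ℝ} (z : P → ι → ℝ) (hA : A.IsHermitian) :
    (A + ∑ p, vecMulVec (z p) (z p)).IsHermitian :=
  hA.add <| isSelfAdjoint_sum _ fun p _ => by
    ext i j
    simp [vecMulVec_apply, mul_comm]

variable [Fintype ι]

lemma dotProduct_add_sum_vecMulVec_mulVec (A : Matrix ι ι ℝ) (z : P → ι → ℝ)
    (x : ι → ℝ) :
    x ⬝ᵥ ((A + ∑ p, vecMulVec (z p) (z p)) *ᵥ x)
      = x ⬝ᵥ (A *ᵥ x) + ∑ p, (z p ⬝ᵥ x) ^ 2 := by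
  simp only [add_mulVec, sum_mulVec, dotProduct_add, dotProduct_sum, vecMulVec_mulVec,
    dotProduct_smul, dotProduct_comm x (z _), MulOpposite.smul_eq_mul_unop, MulOpposite.unop_op, sq]

lemma exists_ne_zero_forall_dotProduct_eq_zero {K : Type*} [Field K] (w : P → ι → K)
    (hcard : Fintype.card P < Fintype.card ι) : ∃ x ≠ 0, ∀ p, w p ⬝ᵥ x = 0 := by
  have hker : LinearMap.ker (of w).mulVecLin ≠ ⊥ :=
    LinearMap.ker_ne_bot_of_finrank_lt (by simpa only [Module.finrank_fintype_fun_eq_card])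
  obtain ⟨x, hx, hx₀⟩ := (Submodule.ne_bot_iff _).1 hker
  exact ⟨x, hx₀, congrFun hx⟩

variable [DecidableEq ι] {A B : Matrix ι ι ℝ}

lemma countP_roots_charpoly (hA : A.IsHermitian) (p : ℝ → Prop) [DecidablePred p] :
    A.charpoly.roots.countP p = Fintype.card {i // p (hA.eigenvalues i)} := by
  rw [hA.roots_charpoly_eq_eigenvalues, Multiset.countP_map, Fintype.card_subtype]
  rfl

lemma countP_le_roots_charpoly_le_card (hA : A.IsHermitian) (t : ℝ) (w : P → ι → ℝ)
    (h : ∀ x ≠ 0, (∀ p, w p ⬝ᵥ x = 0) → t * (x ⬝ᵥ x) < x ⬝ᵥ (A *ᵥ x)) :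
    A.charpoly.roots.countP (· ≤ t) ≤ Fintype.card P := by
  rw [countP_roots_charpoly hA]
  by_contra! hlt
  have hcard : Fintype.card ({i // ¬ hA.eigenvalues i ≤ t} ⊕ P) < Fintype.card ι := by
    rw [Fintype.card_sum, Fintype.card_subtype_compl]
    have := Fintype.card_subtype_le (hA.eigenvalues · ≤ t)
    omega
  obtain ⟨x, hx₀, hx⟩ := exists_ne_zero_forall_dotProduct_eq_zero
    (Sum.elim (fun i : {i // ¬ hA.eigenvalues i ≤ t} => ⇑(hA.eigenvectorBasis i)) w) hcard
  exact (h x hx₀ fun p => hx (.inr p)).not_ge <|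
    dotProduct_mulVec_le_of_forall_gt hA fun i hi => hx (.inl ⟨i, hi.not_ge⟩)

lemma countP_le_roots_charpoly_le_add_card (hA : A.IsHermitian) (hB : B.IsHermitian) (t : ℝ)
    (w : P → ι → ℝ) (h : ∀ x, (∀ p, w p ⬝ᵥ x = 0) → x ⬝ᵥ (B *ᵥ x) ≤ x ⬝ᵥ (A *ᵥ x)) :
    A.charpoly.roots.countP (· ≤ t) ≤ B.charpoly.roots.countP (· ≤ t) + Fintype.card P := by
  rw [countP_roots_charpoly hB, ← Fintype.card_sum]
  refine countP_le_roots_charpoly_le_card hA t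
    (Sum.elim (fun i => ⇑(hB.eigenvectorBasis i)) w) fun x hx₀ hx => ?_
  exact (lt_dotProduct_mulVec_of_forall_le hB (fun i hi => hx (.inl ⟨i, hi⟩)) hx₀).trans_le
    (h x fun p => hx (.inr p))

variable (z : P → ι → ℝ)

lemma countP_le_add_sum_vecMulVec_le (hA : A.IsHermitian) (t : ℝ) :
    (A + ∑ p, vecMulVec (z p) (z p)).charpoly.roots.countP (· ≤ t)
      ≤ A.charpoly.roots.countP (· ≤ t) := by
  refine countP_le_roots_charpoly_le_add_card (isHermitian_add_sum_vecMulVec z hA) hA t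
    (fun p : Empty => p.elim) fun x _ => ?_
  rw [dotProduct_add_sum_vecMulVec_mulVec]
  exact le_add_of_nonneg_right (Finset.sum_nonneg fun p _ => sq_nonneg _)

lemma countP_le_le_add_sum_vecMulVec_add_card (hA : A.IsHermitian) (t : ℝ) :
    A.charpoly.roots.countP (· ≤ t)
      ≤ (A + ∑ p, vecMulVec (z p) (z p)).charpoly.roots.countP (· ≤ t) + Fintype.card P := by
  refine countP_le_roots_charpoly_le_add_card hA (isHermitian_add_sum_vecMulVec z hA) t z
    fun x hx => ?_
  simp [dotProduct_add_sum_vecMulVec_mulVec, hx]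

lemma countP_le_add_sum_vecMulVec_le_countP_lt_add_card {Q : Type*} [Fintype Q]
    (hA : A.IsHermitian) (t : ℝ) (w : Q → ι → ℝ)
    (h : ∀ x, A *ᵥ x = t • x → (∀ p, z p ⬝ᵥ x = 0) → (∀ q, w q ⬝ᵥ x = 0) → x = 0) :
    (A + ∑ p, vecMulVec (z p) (z p)).charpoly.roots.countP (· ≤ t)
      ≤ A.charpoly.roots.countP (· < t) + Fintype.card Q := by
  rw [countP_roots_charpoly hA, ← Fintype.card_sum]
  refine countP_le_roots_charpoly_le_card (isHermitian_add_sum_vecMulVec z hA) t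
    (Sum.elim (fun i => ⇑(hA.eigenvectorBasis i)) w) fun x hx₀ hx => ?_
  have hnonneg : ∀ p ∈ Finset.univ, 0 ≤ (z p ⬝ᵥ x) ^ 2 := fun p _ => sq_nonneg _
  rw [dotProduct_add_sum_vecMulVec_mulVec]
  rcases lt_dotProduct_mulVec_or_mulVec_eq_smul hA fun i hi => hx (.inl ⟨i, hi⟩) with hlt | heig
  · exact lt_add_of_lt_of_nonneg hlt (Finset.sum_nonneg hnonneg)
  · rw [heig, dotProduct_smul, smul_eq_mul, lt_add_iff_pos_right]
    refine (Finset.sum_nonneg hnonneg).lt_of_ne fun hsum => hx₀ ?_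
    have hz := (Finset.sum_eq_zero_iff_of_nonneg hnonneg).1 hsum.symm
    exact h x heig (fun p => pow_eq_zero_iff two_ne_zero |>.1 (hz p (Finset.mem_univ p)))
      fun q => hx (.inr q)

end EigenvalueCount

section KroneckerOne

lemma isHermitian_one_kronecker {ι κ R : Type*} [DecidableEq κ] [CommSemiring R] [StarRing R]
    {A : Matrix ι ι R} (hA : A.IsHermitian) : ((1 : Matrix κ κ R) ⊗ₖ A).IsHermitian := by
  rw [IsHermitian, conjTranspose_kronecker, conjTranspose_one, hA.eq]

variable {ι κ R : Type*} [Fintype ι] [Fintype κ] [DecidableEq κ] [CommRing R]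

lemma one_kronecker_mulVec (A : Matrix ι ι R) (x : κ × ι → R) (c : κ) :
    (fun a => (((1 : Matrix κ κ R) ⊗ₖ A) *ᵥ x) (c, a)) = A *ᵥ fun b => x (c, b) := by
  ext a
  simp [mulVec, dotProduct, kroneckerMap_apply, Fintype.sum_prod_type, one_apply]

lemma charpoly_blockDiagonal [DecidableEq ι] (A : κ → Matrix ι ι R) :
    (blockDiagonal A).charpoly = ∏ c, (A c).charpoly := by
  have hchar : (blockDiagonal A).charmatrix = blockDiagonal fun c => (A c).charmatrix := by
    ext ⟨a, c⟩ ⟨b, d⟩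
    by_cases hcd : c = d <;> by_cases hab : a = b <;> simp [blockDiagonal_apply, hcd, hab]
  rw [charpoly, hchar, det_blockDiagonal]
  rfl

lemma charpoly_one_kronecker [DecidableEq ι] (A : Matrix ι ι R) :
    ((1 : Matrix κ κ R) ⊗ₖ A).charpoly = A.charpoly ^ Fintype.card κ := by
  rw [one_kronecker, charpoly_reindex, charpoly_blockDiagonal, Finset.prod_const, Finset.card_univ]

lemma roots_charpoly_one_kronecker [IsDomain R] [DecidableEq ι] (A : Matrix ι ι R) :
    ((1 : Matrix κ κ R) ⊗ₖ A).charpoly.roots = Fintype.card κ • A.charpoly.roots := by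
  rw [charpoly_one_kronecker, Polynomial.roots_pow]

end KroneckerOne

section LinkedCopies

variable {ι : Type*} {n : ℕ}

/-- The pair `(A, e_m)` is observable, in the form of the Popov-Belevitch-Hautus test: no
eigenvector of `A` vanishes at `m`. -/
def ObservableAt [Fintype ι] (A : Matrix ι ι ℝ) (m : ι) : Prop :=
  ∀ ⦃t : ℝ⦄ ⦃v : ι → ℝ⦄, A *ᵥ v = t • v → v m = 0 → v = 0

variable [DecidableEq ι]

/-- The signed incidence vector of the edge from vertex `s` of copy `p` to vertex `m` of the
next copy. -/
def linkVec (s m : ι) (p : Fin n) : Fin (n + 1) × ι → ℝ :=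
  Pi.single (p.castSucc, s) 1 - Pi.single (p.succ, m) 1

/-- The matrix `I ⊗ A + ∑ z_p z_pᵀ` of `n + 1` copies of a network with matrix `A`, each linked to
the next one by an edge from `s` to `m`. There are `n` links, hence the indexing. -/
def linkedCopies (n : ℕ) (A : Matrix ι ι ℝ) (s m : ι) :
    Matrix (Fin (n + 1) × ι) (Fin (n + 1) × ι) ℝ :=
  1 ⊗ₖ A + ∑ p : Fin n, vecMulVec (linkVec s m p) (linkVec s m p)

variable [Fintype ι] {A : Matrix ι ι ℝ} {s m : ι}

lemma linkVec_dotProduct (p : Fin n) (x : Fin (n + 1) × ι → ℝ) :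
    linkVec s m p ⬝ᵥ x = x (p.castSucc, s) - x (p.succ, m) := by
  simp [linkVec, sub_dotProduct]

lemma ObservableAt.eq_zero_of_forall_linkVec_dotProduct (hm : ObservableAt A m) {t : ℝ}
    {x : Fin (n + 1) × ι → ℝ} (hx : ((1 : Matrix (Fin (n + 1)) _ ℝ) ⊗ₖ A) *ᵥ x = t • x)
    (hz : ∀ p, linkVec s m p ⬝ᵥ x = 0) (h₀ : x (0, m) = 0) : x = 0 := by
  have hblock : ∀ c, x (c, m) = 0 → (fun a => x (c, a)) = 0 := fun c hc =>
    hm (by rw [← one_kronecker_mulVec, hx]; rfl) hc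
  have hmid : ∀ c, x (c, m) = 0 := by
    refine Fin.induction h₀ fun p hp => ?_
    have hlink := hz p
    rwa [linkVec_dotProduct, show x (p.castSucc, s) = 0 from congrFun (hblock _ hp) s, zero_sub,
      neg_eq_zero] at hlink
  ext ⟨c, a⟩
  exact congrFun (hblock c (hmid c)) a

lemma countP_le_linkedCopies_le (hA : A.IsHermitian) (t : ℝ) :
    (linkedCopies n A s m).charpoly.roots.countP (· ≤ t)
      ≤ (n + 1) * A.charpoly.roots.countP (· ≤ t) := by
  simpa [linkedCopies, roots_charpoly_one_kronecker] using
    countP_le_add_sum_vecMulVec_le (linkVec (n := n) s m) (isHermitian_one_kronecker hA) t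

lemma le_countP_le_linkedCopies_add (hA : A.IsHermitian) (t : ℝ) :
    (n + 1) * A.charpoly.roots.countP (· ≤ t)
      ≤ (linkedCopies n A s m).charpoly.roots.countP (· ≤ t) + n := by
  simpa [linkedCopies, roots_charpoly_one_kronecker] using
    countP_le_le_add_sum_vecMulVec_add_card (linkVec (n := n) s m) (isHermitian_one_kronecker hA) t

lemma ObservableAt.countP_le_linkedCopies_le (hm : ObservableAt A m) (hA : A.IsHermitian)
    (t : ℝ) :
    (linkedCopies n A s m).charpoly.roots.countP (· ≤ t)
      ≤ (n + 1) * A.charpoly.roots.countP (· < t) + 1 := by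
  simpa [linkedCopies, roots_charpoly_one_kronecker] using
    countP_le_add_sum_vecMulVec_le_countP_lt_add_card (linkVec (n := n) s m)
      (isHermitian_one_kronecker hA) t (fun _ : Unit => Pi.single (0, m) 1) fun x hx hz h₀ =>
        hm.eq_zero_of_forall_linkVec_dotProduct hx hz (by simpa using h₀ ())

lemma linkedCopies_eigenvalue_mul_eq (hA : A.IsHermitian) {k j : ℕ} {ℓ μ : ℕ → ℝ}
    (mℓ : Monotone ℓ) (mμ : Monotone μ)
    (rℓ : (linkedCopies n A s m).charpoly.roots = (Multiset.range ((n + 1) * k)).map ℓ)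
    (rμ : A.charpoly.roots = (Multiset.range k).map μ) (hj : j < k) :
    ℓ ((n + 1) * j) = μ j := by
  have hi : (n + 1) * j < (n + 1) * k := Nat.mul_lt_mul_of_pos_left hj n.succ_pos
  apply le_antisymm
  · rw [le_iff_lt_countP_le mℓ hi, ← rℓ]
    have hμ : j + 1 ≤ A.charpoly.roots.countP (· ≤ μ j) := by
      rw [rμ]
      exact (le_iff_lt_countP_le mμ hj _).1 le_rfl
    have hmul := Nat.mul_le_mul_left (n + 1) hμ
    have hcount := le_countP_le_linkedCopies_add (n := n) (s := s) (m := m) hA (μ j)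
    rw [mul_add_one] at hmul
    omega
  · rw [le_iff_lt_countP_le mμ hj, ← rμ]
    have hℓ := (le_iff_lt_countP_le mℓ hi _).1 le_rfl
    rw [← rℓ] at hℓ
    exact lt_of_mul_lt_mul_left' (hℓ.trans_le (countP_le_linkedCopies_le hA _))

lemma ObservableAt.lt_linkedCopies_eigenvalue (hm : ObservableAt A m) (hA : A.IsHermitian)
    (hn : 0 < n) {k j : ℕ} {ℓ μ : ℕ → ℝ} (mℓ : Monotone ℓ) (mμ : Monotone μ)
    (rℓ : (linkedCopies n A s m).charpoly.roots = (Multiset.range ((n + 1) * k)).map ℓ)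
    (rμ : A.charpoly.roots = (Multiset.range k).map μ) (hj : j < k) :
    μ j < ℓ ((n + 1) * j + 1) := by
  have hi : (n + 1) * j + 1 < (n + 1) * k := by
    calc (n + 1) * j + 1 < (n + 1) * (j + 1) := by rw [mul_add_one]; omega
      _ ≤ (n + 1) * k := Nat.mul_le_mul_left _ hj
  by_contra! hle
  rw [le_iff_lt_countP_le mℓ hi, ← rℓ] at hle
  have hμ : A.charpoly.roots.countP (· < μ j) ≤ j := by
    rw [rμ]
    exact not_lt.1 fun h => lt_irrefl _ ((lt_iff_lt_countP_lt mμ hj _).2 h)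
  have hmul := Nat.mul_le_mul_left (n + 1) hμ
  have hcount := hm.countP_le_linkedCopies_le (n := n) (s := s) hA (μ j)
  omega

theorem interLap_lower_eigenvalue_bounds_general (hA : A.IsHermitian) (hm : ObservableAt A m)
    (hn : 0 < n) {k : ℕ} {ℓbar ℓ μ : ℕ → ℝ} (mbar : Monotone ℓbar) (mℓ : Monotone ℓ)
    (mμ : Monotone μ)
    (rbar : ((1 : Matrix (Fin (n + 1)) _ ℝ) ⊗ₖ A).charpoly.roots
      = (Multiset.range ((n + 1) * k)).map ℓbar)
    (rℓ : (linkedCopies n A s m).charpoly.roots = (Multiset.range ((n + 1) * k)).map ℓ)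
    (rμ : A.charpoly.roots = (Multiset.range k).map μ) {j : ℕ} (hj : j < k) :
    ℓbar ((n + 1) * j) = ℓ ((n + 1) * j) ∧ ℓ ((n + 1) * j) = ℓbar ((n + 1) * j + 1) ∧
      ℓbar ((n + 1) * j + 1) < ℓ ((n + 1) * j + 1) ∧ ℓbar ((n + 1) * j) = μ j := by
  have hbar (r : ℕ) (hr : r < n + 1) : ℓbar ((n + 1) * j + r) = μ j := by
    have hi : (n + 1) * j + r < (n + 1) * k :=
      calc (n + 1) * j + r < (n + 1) * (j + 1) := by rw [mul_add_one]; omega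
        _ ≤ (n + 1) * k := Nat.mul_le_mul_left _ hj
    rw [roots_charpoly_one_kronecker, Fintype.card_fin, rμ] at rbar
    rw [apply_eq_apply_div_of_map_range_eq_nsmul mbar mμ rbar.symm hi,
      Nat.mul_add_div n.succ_pos, Nat.div_eq_of_lt hr, add_zero]
  have hbar₀ : ℓbar ((n + 1) * j) = μ j := hbar 0 n.succ_pos
  have hbar₁ : ℓbar ((n + 1) * j + 1) = μ j := hbar 1 (by omega)
  rw [hbar₀, hbar₁, linkedCopies_eigenvalue_mul_eq hA mℓ mμ rℓ rμ hj]
  exact ⟨rfl, rfl, hm.lt_linkedCopies_eigenvalue hA hn mℓ mμ rℓ rμ hj, rfl⟩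

end LinkedCopies

section Antireg

/-- The equation `L v = t v` for the Laplacian `L` of the antiregular graph `A_k`, for a vector
given by the first `k` values of `v : ℕ → ℝ`. A loop does not change a Laplacian, so vertex `a`
(0-indexed) may be given all of `0, …, k - 1 - a` as neighbours, itself possibly included. -/
def AntiregEigenEq (k : ℕ) (t : ℝ) (v : ℕ → ℝ) : Prop :=
  ∀ a < k, (k - a - t) * v a = ∑ i ∈ Finset.range (k - a), v i

namespace AntiregEigenEq

variable {k : ℕ} {t : ℝ} {v : ℕ → ℝ}

lemma mul_sum_eq_zero (h : AntiregEigenEq k t v) : t * ∑ a ∈ Finset.range k, v a = 0 := by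
  have hswap : ∑ a ∈ Finset.range k, ∑ i ∈ Finset.range (k - a), v i
      = ∑ i ∈ Finset.range k, ∑ _a ∈ Finset.range (k - i), v i :=
    Finset.sum_comm' fun a i => by simp only [Finset.mem_range]; omega
  calc t * ∑ a ∈ Finset.range k, v a
      = ∑ a ∈ Finset.range k, ((k - a : ℕ) * v a - (k - a - t) * v a) := by
        rw [Finset.mul_sum]
        refine Finset.sum_congr rfl fun a ha => ?_
        rw [Nat.cast_sub (Finset.mem_range.1 ha).le]
        ring
    _ = ∑ a ∈ Finset.range k, ∑ _i ∈ Finset.range (k - a), v a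
        - ∑ a ∈ Finset.range k, ∑ i ∈ Finset.range (k - a), v i := by
        rw [Finset.sum_sub_distrib, Finset.sum_congr rfl fun a ha => h a (Finset.mem_range.1 ha)]
        simp only [Finset.sum_const, Finset.card_range, nsmul_eq_mul]
    _ = 0 := by rw [hswap, sub_self]

lemma head_eq_zero (h : AntiregEigenEq k t v) (hk : 0 < k) (ht₀ : t ≠ 0) (htk : t ≠ k) :
    v 0 = 0 := by
  have hsum := (mul_eq_zero.1 h.mul_sum_eq_zero).resolve_left ht₀
  have hhead : (k - t) * v 0 = 0 := by simpa [hsum] using h 0 hk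
  exact (mul_eq_zero.1 hhead).resolve_left (sub_ne_zero.2 htk.symm)

lemma head_eq_mul_last (h : AntiregEigenEq (k + 1) t v) : v 0 = (1 - t) * v k := by
  simpa using (h k k.lt_succ_self).symm

-- Deleting the dominating vertex `0` of `A_{k+2}` isolates the pendant vertex `k + 1` and leaves
-- `A_k` on the other vertices, each of which has lost one neighbour: this is the shift of `t`.
lemma inner (h : AntiregEigenEq (k + 2) t v) {d : ℝ} (hd : v 0 = (1 - t) * d) :
    AntiregEigenEq k (t - 1) fun a => v (a + 1) - d := by
  intro a ha
  have hsucc := h (a + 1) (by omega)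
  rw [show k + 2 - (a + 1) = k - a + 1 by omega, Finset.sum_range_succ', hd] at hsucc
  rw [Finset.sum_sub_distrib, Finset.sum_const, Finset.card_range, nsmul_eq_mul,
    Nat.cast_sub ha.le]
  push_cast at hsucc
  linear_combination hsucc

lemma eq_zero_of_inner (h : AntiregEigenEq (k + 2) t v) (h₀ : v 0 = 0)
    (hinner : ∀ a < k, v (a + 1) = 0) : ∀ a < k + 2, v a = 0 := by
  have hlast : v (k + 1) = 0 := by
    have hhead := h 0 (by omega)
    rw [h₀, mul_zero, Nat.sub_zero, Finset.sum_range_succ, Finset.sum_range_succ', h₀,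
      Finset.sum_eq_zero fun i hi => hinner i (Finset.mem_range.1 hi)] at hhead
    simpa using hhead.symm
  rintro (_ | a) ha
  · exact h₀
  · rcases Nat.lt_succ_iff_lt_or_eq.1 (Nat.succ_lt_succ_iff.1 ha) with hak | rfl
    · exact hinner a hak
    · exact hlast

lemma eq_zero_of_notMem_Icc (h : AntiregEigenEq k t v) (ht : t ∉ Set.Icc (0 : ℝ) k) :
    ∀ a < k, v a = 0 := by
  have hne : t ≠ 0 ∧ t ≠ k := by
    constructor <;> rintro rfl <;> simp at ht
  induction k using Nat.twoStepInduction generalizing t v with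
  | zero => simp
  | one => simpa using h.head_eq_zero one_pos hne.1 hne.2
  | more k ih _ =>
    have h₀ : v 0 = 0 := h.head_eq_zero (by omega) hne.1 hne.2
    have ht' : t - 1 ∉ Set.Icc (0 : ℝ) k := fun hmem => ht <| by
      push_cast
      exact ⟨by linarith [hmem.1], by linarith [hmem.2]⟩
    have hinner := ih (h.inner (d := 0) (by simp [h₀])) ht'
      (by constructor <;> intro h' <;> simp [h'] at ht')
    exact h.eq_zero_of_inner h₀ fun a ha => by simpa using hinner a ha

lemma eq_zero_of_middle (h : AntiregEigenEq k t v) (hmid : v ((k + 1) / 2 - 1) = 0) :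
    ∀ a < k, v a = 0 := by
  induction k using Nat.twoStepInduction generalizing t v with
  | zero => simp
  | one => simpa using hmid
  | more k ih _ =>
    -- If `v 0 ≠ 0` then `t - 1` is not an eigenvalue of `A_k`, so `v` takes its last value at all
    -- the inner vertices, among which is the middle one.
    have h₀ : v 0 = 0 := by
      by_contra hne
      have ht : t = 0 ∨ t = k + 2 := by
        by_contra! ht
        exact hne (h.head_eq_zero (by omega) ht.1 (by exact_mod_cast ht.2))
      have ht' : t - 1 ∉ Set.Icc (0 : ℝ) k := by
        rintro ⟨h1, h2⟩
        rcases ht with rfl | rfl <;> linarith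
      obtain ⟨m, hm⟩ := Nat.exists_eq_succ_of_ne_zero fun hm => hne (hm ▸ hmid)
      have hlast : v (k + 1) = 0 := by
        have hm0 := (h.inner h.head_eq_mul_last).eq_zero_of_notMem_Icc ht' m (by omega)
        rwa [← Nat.succ_eq_add_one, ← hm, hmid, zero_sub, neg_eq_zero] at hm0
      exact hne (by rw [h.head_eq_mul_last, hlast, mul_zero])
    refine h.eq_zero_of_inner h₀ fun a ha => ?_
    have hinner := ih (h.inner (d := 0) (by simp [h₀]))
    rw [sub_zero, show (k + 1) / 2 - 1 + 1 = (k + 2 + 1) / 2 - 1 by omega] at hinner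
    simpa using hinner hmid a ha

end AntiregEigenEq

lemma antiregLap_apply (k : ℕ) (a b : Fin k) :
    antiregLap k a b = (if a = b then (k - a : ℝ) else 0) - if b < k - a.val then 1 else 0 := by
  rcases eq_or_ne a b with rfl | hab
  · have hset : ({b | b ≠ a ∧ a.val + b.val + 2 ≤ k + 1} : Finset (Fin k))
        = ({b | b.val < k - a.val} : Finset (Fin k)).erase a := by
      ext b
      simp only [Finset.mem_filter_univ, Finset.mem_erase]
      omega
    have hcard : ({b | b.val < k - a.val} : Finset (Fin k)).card = k - a.val := by
      rw [Fin.card_filter_val_lt, min_eq_right (Nat.sub_le _ _)]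
    rw [antiregLap, of_apply, if_pos rfl, if_pos rfl, hset, ← Nat.cast_sub a.isLt.le]
    split_ifs with ha
    · rw [Finset.card_erase_of_mem (by simpa using ha), hcard, Nat.cast_pred (by omega)]
    · rw [Finset.erase_eq_of_notMem (by simpa using ha), hcard, sub_zero]
  · have hadj : a.val + b.val + 2 ≤ k + 1 ↔ b.val < k - a.val := by omega
    simp only [antiregLap, of_apply, if_neg hab, hadj]
    split_ifs <;> simp

lemma antiregLap_isHermitian (k : ℕ) : (antiregLap k).IsHermitian := by
  refine IsHermitian.ext fun a b => ?_
  rcases eq_or_ne a b with rfl | hab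
  · exact star_trivial _
  · simp only [star_trivial, antiregLap, of_apply, if_neg hab, if_neg hab.symm, add_comm b.val]

lemma antiregLap_mulVec_apply (k : ℕ) (v : ℕ → ℝ) (a : Fin k) :
    (antiregLap k *ᵥ fun b => v b) a = (k - a) * v a - ∑ i ∈ Finset.range (k - a), v i := by
  have hsum : ∑ b : Fin k, (if b.val < k - a then v b else 0)
      = ∑ i ∈ Finset.range (k - a), v i := by
    rw [Fin.sum_univ_eq_sum_range fun b => if b < k - a then v b else 0, ← Finset.sum_filter]
    congr 1
    ext i
    simp only [Finset.mem_filter, Finset.mem_range]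
    omega
  simp only [mulVec, dotProduct, antiregLap_apply, sub_mul, ite_mul, zero_mul, one_mul,
    Finset.sum_sub_distrib, Finset.sum_ite_eq, Finset.mem_univ, if_true, hsum]

lemma antiregLap_observableAt {k : ℕ} (hk : 0 < k) :
    ObservableAt (antiregLap k) ⟨(k + 1) / 2 - 1, by omega⟩ := by
  intro t v hv hmid
  obtain ⟨w, rfl⟩ : ∃ w : ℕ → ℝ, v = fun a : Fin k => w a :=
    ⟨fun i => if hi : i < k then v ⟨i, hi⟩ else 0, by simp⟩
  have heq : AntiregEigenEq k t w := fun a ha => by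
    have hrow := congrFun hv ⟨a, ha⟩
    rw [antiregLap_mulVec_apply, Pi.smul_apply, smul_eq_mul] at hrow
    linear_combination hrow
  exact funext fun a => heq.eq_zero_of_middle hmid a a.isLt

lemma interLap_eq_linkedCopies (n k : ℕ) (hk : 2 ≤ k) :
    interLap (n + 1) k hk = linkedCopies n (antiregLap k) ⟨k - 1, by omega⟩
      ⟨(k + 1) / 2 - 1, by omega⟩ := by
  have hz (p : Fin n) : zvec (n + 1) k hk p
      = linkVec (⟨k - 1, by omega⟩ : Fin k) ⟨(k + 1) / 2 - 1, by omega⟩ p := by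
    ext q
    simp only [zvec, linkVec, Pi.sub_apply, Pi.single_apply]
    rfl
  simp only [linkedCopies, ← hz]
  rfl

end Antireg

/-- Lemma: lower interlacing bound.  Eigenvalues are encoded
0-indexed: each list is monotone on `ℕ` and enumerates the roots of the
characteristic polynomial with multiplicity, so e.g. `ℓ i` is the `(i+1)`-th
smallest eigenvalue of `𝓛` for `i < n*k`.  For every `j ∈ {0,…,k-1}` (so the
1-indexed positions are `nj+1` and `nj+2`):
`λ_{nj+1}(L̄) = λ_{nj+1}(𝓛) = λ_{nj+2}(L̄) < λ_{nj+2}(𝓛)`, and the common value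
is the `(j+1)`-th smallest eigenvalue of `L_A^{(k)}`. -/
theorem interLap_lower_eigenvalue_bounds (k n : ℕ) (hk : 2 ≤ k) (hn : 2 ≤ n)
    (ℓbar ℓ μ : ℕ → ℝ)
    (mbar : Monotone ℓbar) (mℓ : Monotone ℓ) (mμ : Monotone μ)
    (rbar : (copiesLap n k).charpoly.roots = (Multiset.range (n * k)).map ℓbar)
    (rℓ : (interLap n k hk).charpoly.roots = (Multiset.range (n * k)).map ℓ)
    (rμ : (antiregLap k).charpoly.roots = (Multiset.range k).map μ) :
    ∀ j : ℕ, j < k →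
      ℓbar (n * j) = ℓ (n * j) ∧ ℓ (n * j) = ℓbar (n * j + 1) ∧
      ℓbar (n * j + 1) < ℓ (n * j + 1) ∧ ℓbar (n * j) = μ j := by
  obtain ⟨n, rfl⟩ : ∃ m, n = m + 1 := ⟨n - 1, by omega⟩
  rw [interLap_eq_linkedCopies] at rℓ
  exact fun j hj => interLap_lower_eigenvalue_bounds_general (antiregLap_isHermitian k)
    (antiregLap_observableAt (by omega)) (by omega) mbar mℓ mμ rbar rℓ rμ hj
end

section
/- Let k ≥ 2, n ≥ 1, κ̄ = ⌈k/2⌉, and 𝓛 = I_n ⊗ L_A^{(k)} + Σ_{i=1}^{n−1} z_i z_iᵀ with z_i = e_{ik} − e_{ik+κ̄}. Then the pair (𝓛, e_{κ̄}) is controllable; that is, the graph obtained by interconnecting n copies of the k-vertex antiregular graph (connecting the terminal vertex of the p-th copy to the degree-repeating vertex κ̄ of the (p+1)-th copy for each p ∈ {1,…,n−1}) is Laplacian controllable by a single input connected to the degree-repeating vertex κ̄ of the first copy. -/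
/-- `(M, b)` is controllable: `b, Mb, M²b, …` span the whole space. -/
def IsControllable {ι : Type} [Fintype ι] [DecidableEq ι]
    (M : Matrix ι ι ℝ) (b : ι → ℝ) : Prop :=
  Submodule.span ℝ (Set.range fun j : Fin (Fintype.card ι) => (M ^ (j : ℕ)).mulVec b) = ⊤

open Matrix
open Fintype (balance)
open scoped Kronecker BigOperators

section Hautus

lemma pow_mulVec_mem_span_pow_mulVec_lt_card {ι R : Type*} [Fintype ι] [DecidableEq ι]
    [CommRing R] (M : Matrix ι ι R) (b : ι → R) (j : ℕ) :
    (M ^ j) *ᵥ b ∈ Submodule.span R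
      (Set.range fun i : Fin (Fintype.card ι) => (M ^ (i : ℕ)) *ᵥ b) := by
  nontriviality R
  set q := (Polynomial.X ^ j %ₘ M.charpoly : Polynomial R) with hq
  have hdeg : q.degree < Fintype.card ι :=
    (Polynomial.degree_modByMonic_lt _ M.charpoly_monic).trans_eq M.charpoly_degree_eq_dim
  rw [M.pow_eq_aeval_mod_charpoly j, ← hq, Polynomial.aeval_def, Polynomial.eval₂_eq_sum,
    Polynomial.sum_def, sum_mulVec]
  refine Submodule.sum_mem _ fun i hi => ?_
  have hi : i < Fintype.card ι :=
    Nat.cast_lt.1 ((Polynomial.le_degree_of_mem_supp i hi).trans_lt hdeg)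
  rw [← Algebra.smul_def, smul_mulVec]
  exact Submodule.smul_mem _ _ (Submodule.subset_span ⟨⟨i, hi⟩, rfl⟩)

lemma exists_eigenvector_mem_of_isSymm {ι : Type*} [Fintype ι] {M : Matrix ι ι ℝ}
    (hM : M.IsSymm) {P : Submodule ℝ (ι → ℝ)} (hP : P ≠ ⊥) (hinv : ∀ x ∈ P, M *ᵥ x ∈ P) :
    ∃ x ∈ P, x ≠ 0 ∧ ∃ l : ℝ, M *ᵥ x = l • x := by
  classical
  let T : Module.End ℝ (EuclideanSpace ℝ ι) := toEuclideanLin M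
  let Q : Submodule ℝ (EuclideanSpace ℝ ι) := P.comap (WithLp.linearEquiv 2 ℝ (ι → ℝ)).toLinearMap
  have hT : T.IsSymmetric := isSymmetric_toEuclideanLin_iff.2 (isHermitian_iff_isSymm.2 hM)
  have hTQ : ∀ x ∈ Q, T x ∈ Q := fun x hx => hinv x.ofLp hx
  by_contra! hnone
  have hQ : Subsingleton Q := by
    refine (hT.restrict_invariant hTQ).subsingleton_of_no_eigenvalue_finiteDimensional fun l => ?_
    rw [Submodule.eq_bot_iff]
    intro x hx
    have hTx : T x = l • (x : EuclideanSpace ℝ ι) :=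
      congrArg Subtype.val (Module.End.mem_eigenspace_iff.1 hx)
    by_contra hx0
    exact hnone x.1.ofLp x.2 (by simpa using hx0) l (congrArg WithLp.ofLp hTx)
  refine hP ((Submodule.eq_bot_iff _).2 fun x hx => ?_)
  exact congrArg (fun y : Q => y.1.ofLp) (Subsingleton.elim (⟨WithLp.toLp 2 x, hx⟩ : Q) 0)

variable {ι : Type} [Fintype ι] [DecidableEq ι] {M : Matrix ι ι ℝ} {b : ι → ℝ}

lemma isControllable_iff_forall_dotProduct_pow_mulVec :
    IsControllable M b ↔ ∀ x : ι → ℝ, (∀ j : ℕ, x ⬝ᵥ (M ^ j) *ᵥ b = 0) → x = 0 := by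
  constructor
  · intro h x hx
    have hker : (⊤ : Submodule ℝ (ι → ℝ)) ≤ LinearMap.ker (dotProductEquiv ℝ ι x) := by
      rw [← h, Submodule.span_le]
      rintro _ ⟨j, rfl⟩
      exact hx j
    exact dotProduct_self_eq_zero.1 (hker (Submodule.mem_top (x := x)))
  · intro h
    by_contra hne
    obtain ⟨f, hf, hker⟩ := Submodule.exists_le_ker_of_lt_top _ (lt_top_iff_ne_top.2 hne)
    obtain ⟨x, rfl⟩ := (dotProductEquiv ℝ ι).surjective f
    have hx : x = 0 := h x fun j => hker (pow_mulVec_mem_span_pow_mulVec_lt_card M b j)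
    exact hf (by rw [hx, map_zero])

/-- The **Popov–Belevitch–Hautus test** for symmetric matrices. -/
theorem isControllable_iff_forall_eigenvector (hM : M.IsSymm) :
    IsControllable M b ↔ ∀ (l : ℝ) (x : ι → ℝ), M *ᵥ x = l • x → x ⬝ᵥ b = 0 → x = 0 := by
  rw [isControllable_iff_forall_dotProduct_pow_mulVec]
  have hadj (x y : ι → ℝ) : x ⬝ᵥ M *ᵥ y = (M *ᵥ x) ⬝ᵥ y := by
    rw [dotProduct_mulVec, ← mulVec_transpose, hM.eq]
  constructor
  · intro h l x hx hb
    refine h x fun j => ?_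
    induction j with
    | zero => simpa using hb
    | succ j ih => rw [pow_succ', ← mulVec_mulVec, hadj, hx, smul_dotProduct, ih, smul_zero]
  · intro h x hx
    let P : Submodule ℝ (ι → ℝ) :=
      ⨅ j : ℕ, LinearMap.ker (dotProductEquiv ℝ ι ((M ^ j) *ᵥ b))
    have hmem {y : ι → ℝ} : y ∈ P ↔ ∀ j : ℕ, y ⬝ᵥ (M ^ j) *ᵥ b = 0 := by
      simp [P, dotProduct_comm y]
    have hinv : ∀ y ∈ P, M *ᵥ y ∈ P := fun y hy => hmem.2 fun j => by
      rw [← hadj, mulVec_mulVec, ← pow_succ']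
      exact hmem.1 hy (j + 1)
    have hP : P = ⊥ := by
      by_contra hP
      obtain ⟨y, hy, hy0, l, hl⟩ := exists_eigenvector_mem_of_isSymm hM hP hinv
      exact hy0 (h l y hl (by simpa using hmem.1 hy 0))
    exact (Submodule.mem_bot ℝ).1 (hP ▸ hmem.2 hx)

end Hautus

section Chain

variable {V : Type} [DecidableEq V] {R : Type*} [Ring R] {n : ℕ}

/-- The signed incidence vector of the edge of a chain that joins the vertex `t` of copy `p` to the
vertex `a` of copy `p + 1`. -/
def chainLink (a t : V) (p : Fin n) : Fin (n + 1) × V → R :=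
  Pi.single (p.castSucc, t) 1 - Pi.single (p.succ, a) 1

/-- The Laplacian matrix of the chain of `n + 1` copies of a graph with Laplacian matrix `M`, in
which the vertex `t` of each copy is joined to the vertex `a` of the next one. Any matrix is allowed
as `M`. -/
def chainLap (n : ℕ) (M : Matrix V V R) (a t : V) : Matrix (Fin (n + 1) × V) (Fin (n + 1) × V) R :=
  (1 : Matrix (Fin (n + 1)) (Fin (n + 1)) R) ⊗ₖ M +
    ∑ p : Fin n, vecMulVec (chainLink a t p) (chainLink a t p)

/-- The difference of the values of `y` at the two ends of each connecting edge of a chain. -/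
def chainJump (a t : V) (y : Fin (n + 1) × V → R) (p : Fin n) : R :=
  y (p.castSucc, t) - y (p.succ, a)

lemma chainLap_isSymm {R : Type*} [CommRing R] {M : Matrix V V R} (hM : M.IsSymm) (a t : V) :
    (chainLap n M a t).IsSymm := by
  have hsum : (∑ p : Fin n, vecMulVec (chainLink a t p) (chainLink a t p) :
      Matrix (Fin (n + 1) × V) (Fin (n + 1) × V) R).IsSymm := by
    simp [IsSymm, transpose_sum, transpose_vecMulVec]
  exact IsSymm.add (by rw [IsSymm, ← kroneckerMap_transpose, transpose_one, hM.eq]) hsum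

variable [Fintype V]

lemma curry_chainLap_mulVec (M : Matrix V V R) (a t : V) (y : Fin (n + 1) × V → R)
    (p : Fin (n + 1)) :
    Function.curry (chainLap n M a t *ᵥ y) p = M *ᵥ Function.curry y p
      + Pi.single t (Fin.snoc (α := fun _ => R) (chainJump a t y) 0 p)
      - Pi.single a (Fin.cons (α := fun _ => R) 0 (chainJump a t y) p) := by
  have hjump (q : Fin n) : chainLink a t q ⬝ᵥ y = chainJump a t y q := by
    simp [chainLink, chainJump, sub_dotProduct]
  have hblock (i : V) : ((1 : Matrix (Fin (n + 1)) (Fin (n + 1)) R) ⊗ₖ M *ᵥ y) (p, i)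
      = (M *ᵥ Function.curry y p) i := by
    simp [mulVec, dotProduct, Fintype.sum_prod_type, one_apply, Function.curry]
  have hout (i : V) : ∑ q : Fin n, (Pi.single (q.castSucc, t) 1 : _ → R) (p, i) * chainJump a t y q
      = (Pi.single t (Fin.snoc (α := fun _ => R) (chainJump a t y) 0 p) : V → R) i := by
    induction p using Fin.lastCases <;> simp [Pi.single_apply, ite_and]
  have hin (i : V) : ∑ q : Fin n, (Pi.single (q.succ, a) 1 : _ → R) (p, i) * chainJump a t y q
      = (Pi.single a (Fin.cons (α := fun _ => R) 0 (chainJump a t y) p) : V → R) i := by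
    induction p using Fin.cases <;> simp [Pi.single_apply, ite_and]
  ext i
  simp only [Function.curry_apply, chainLap, add_mulVec, sum_mulVec, vecMulVec_mulVec, hjump,
    hblock, Pi.add_apply, Pi.sub_apply, Finset.sum_apply, Pi.smul_apply, op_smul_eq_mul, ← hout,
    ← hin]
  simp only [chainLink, Pi.sub_apply, sub_mul, Finset.sum_sub_distrib, add_sub_assoc]

lemma mulVec_curry_of_chainLap_eigenvector {M : Matrix V V R} {a t : V} {l : R}
    {y : Fin (n + 1) × V → R} (hy : chainLap n M a t *ᵥ y = l • y) (p : Fin (n + 1)) :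
    M *ᵥ Function.curry y p + Pi.single t (Fin.snoc (α := fun _ => R) (chainJump a t y) 0 p)
      - Pi.single a (Fin.cons (α := fun _ => R) 0 (chainJump a t y) p)
      = l • Function.curry y p := by
  rw [← curry_chainLap_mulVec, hy]
  rfl

variable {M : Matrix V V ℝ} {a t : V}

/-- Pairing the equation of copy `p + 1` with `v` leaves only the jump into that copy. -/
lemma chainJump_eq_zero_of_eigenvector (hM : M.IsSymm) {l : ℝ} {v : V → ℝ} (hv : M *ᵥ v = l • v)
    (hvt : v t = 0) (hva : v a ≠ 0) {y : Fin (n + 1) × V → ℝ}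
    (hy : chainLap n M a t *ᵥ y = l • y) : chainJump a t y = 0 := by
  ext q
  have hpair : v ⬝ᵥ M *ᵥ Function.curry y q.succ = l * v ⬝ᵥ Function.curry y q.succ := by
    rw [dotProduct_mulVec, ← mulVec_transpose, hM.eq, hv, smul_dotProduct, smul_eq_mul]
  have hdot := congrArg (v ⬝ᵥ ·) (mulVec_curry_of_chainLap_eigenvector hy q.succ)
  simp only [dotProduct_sub, dotProduct_add, dotProduct_smul, dotProduct_single, hpair, hvt,
    Fin.cons_succ, smul_eq_mul, zero_mul, add_zero] at hdot
  have hmul : v a * chainJump a t y q = 0 := by linarith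
  exact (mul_eq_zero.1 hmul).resolve_left hva

/-- The hypothesis `ht` says that a frequency `l` at which the response at `a` to
an input at `t` vanishes is an eigenvalue with an eigenvector invisible from `t`. -/
theorem IsControllable.chainLap (hM : M.IsSymm) (ha : IsControllable M (Pi.single a 1))
    (ht : ∀ (l : ℝ) (x : V → ℝ), (∀ i ≠ t, (M *ᵥ x) i = l * x i) → x a = 0 → x ≠ 0 →
      ∃ v : V → ℝ, v ≠ 0 ∧ M *ᵥ v = l • v ∧ v t = 0) (n : ℕ) :
    IsControllable (chainLap n M a t) (Pi.single (0, a) 1) := by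
  rw [isControllable_iff_forall_eigenvector hM] at ha
  rw [isControllable_iff_forall_eigenvector (chainLap_isSymm hM a t)]
  simp only [dotProduct_single_one] at ha ⊢
  intro l y hy hy0
  have hrow := mulVec_curry_of_chainLap_eigenvector hy
  have hcopy (p : Fin (n + 1)) (hin : Fin.cons (α := fun _ => ℝ) 0 (chainJump a t y) p = 0)
      (hpa : y (p, a) = 0) : Function.curry y p = 0 := by
    by_contra hne
    obtain ⟨v, hv0, hv, hvt⟩ := ht l (Function.curry y p) (fun i hi => by
      simpa [hin, hi] using congrFun (hrow p) i) hpa hne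
    have hjump : chainJump a t y = 0 :=
      chainJump_eq_zero_of_eigenvector hM hv hvt (fun hva => hv0 (ha l v hv hva)) hy
    have hout : Fin.snoc (α := fun _ => ℝ) (chainJump a t y) 0 p = 0 := by
      induction p using Fin.lastCases <;> simp [hjump]
    exact hne (ha l _ (by simpa [hin, hout] using hrow p) hpa)
  have hzero (p : Fin (n + 1)) : Function.curry y p = 0 ∧
      Fin.cons (α := fun _ => ℝ) 0 (chainJump a t y) p = 0 := by
    induction p using Fin.induction with
    | zero => exact ⟨hcopy 0 rfl hy0, rfl⟩
    | succ p ih =>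
      obtain ⟨hp, hin⟩ := ih
      have hjump : chainJump a t y p = 0 := by
        simpa [hp, hin] using congrFun (hrow p.castSucc) t
      have hpa : y (p.succ, a) = 0 := by
        have hpt : y (p.castSucc, t) = 0 := congrFun hp t
        simpa [chainJump, hpt] using hjump
      exact ⟨hcopy p.succ (by simpa using hjump) hpa, by simpa using hjump⟩
  exact funext fun q => congrFun (hzero q.1).1 q.2

end Chain

section Mean

variable {V K : Type*} [Fintype V] [Field K] [CharZero K]

lemma eq_neg_mul_expect_of_mulVec_eq_smul_add_const [Nonempty V] {M : Matrix V V K}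
    (hcol : 1 ᵥ* M = 0) {x : V → K} {m s : K} (hx : M *ᵥ x = m • x + Function.const V s) :
    s = -m * 𝔼 i, x i := by
  have hsum : ∑ i, (M *ᵥ x) i = 0 := by
    rw [← one_dotProduct, dotProduct_mulVec, hcol, zero_dotProduct]
  have hmean : 𝔼 i, (M *ᵥ x) i = 0 := by
    rw [Fintype.expect_eq_sum_div_card, hsum, zero_div]
  simp only [hx, Pi.add_apply, Pi.smul_apply, Function.const_apply, smul_eq_mul,
    Finset.expect_add_distrib, ← Finset.mul_expect, Fintype.expect_const] at hmean
  linear_combination hmean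

lemma mulVec_balance_of_mulVec_eq_smul_add_const [Nonempty V] {M : Matrix V V K}
    (hrow : M *ᵥ 1 = 0) (hcol : 1 ᵥ* M = 0) {x : V → K} {m s : K}
    (hx : M *ᵥ x = m • x + Function.const V s) : M *ᵥ balance x = m • balance x := by
  have hconst (c : K) : Function.const V c = c • (1 : V → K) := by ext; simp
  rw [balance, mulVec_sub, hconst, mulVec_smul, hrow, smul_zero, sub_zero, hx, hconst,
    eq_neg_mul_expect_of_mulVec_eq_smul_add_const hcol hx]
  module

lemma eq_zero_of_balance_eq_zero {x : V → K} (hx : balance x = 0) {i : V} (hi : x i = 0) :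
    x = 0 := by
  have hmean (j : V) : x j = 𝔼 m, x m := sub_eq_zero.1 (congrFun hx j)
  ext j
  rw [hmean j, ← hmean i, hi, Pi.zero_apply]

end Mean

lemma eq_zero_of_init_tail_eq_zero {A : Type*} [AddCommMonoid A] {k : ℕ} {x : Fin (k + 2) → A}
    (hfirst : x 0 = 0) (hmiddle : Fin.init (Fin.tail x) = 0) (hsum : ∑ i, x i = 0) : x = 0 := by
  have hmid (i : Fin k) : x i.castSucc.succ = 0 := congrFun hmiddle i
  have hlast : x (Fin.last k).succ = 0 := by
    simpa [Fin.sum_univ_succ x, Fin.sum_univ_castSucc, hfirst, hmid] using hsum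
  ext i
  induction i using Fin.cases with
  | zero => exact hfirst
  | succ i => induction i using Fin.lastCases with
    | last => exact hlast
    | cast i => exact hmid i

section Antiregular

/-- The antiregular graph on `Fin k`: the vertices `i` and `j` stand for `i + 1` and `j + 1` in the
1-indexed description, so that `(i + 1) + (j + 1) ≤ k + 1` becomes `i + j < k`. -/
def antiregularGraph (k : ℕ) : SimpleGraph (Fin k) where
  Adj i j := i ≠ j ∧ i.val + j.val < k
  symm := ⟨fun i j h => ⟨h.1.symm, by omega⟩⟩

instance (k : ℕ) : DecidableRel (antiregularGraph k).Adj :=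
  fun i j => inferInstanceAs (Decidable (i ≠ j ∧ i.val + j.val < k))

@[simp]
lemma antiregularGraph_adj {k : ℕ} {i j : Fin k} :
    (antiregularGraph k).Adj i j ↔ i ≠ j ∧ i.val + j.val < k :=
  Iff.rfl

lemma antiregLap_eq_lapMatrix (k : ℕ) : antiregLap k = (antiregularGraph k).lapMatrix ℝ := by
  have hadj (i j : ℕ) : i + j + 2 ≤ k + 1 ↔ i + j < k := by omega
  ext i j
  have hdeg : ((antiregularGraph k).degree i : ℝ)
      = (Finset.univ.filter fun m : Fin k => m ≠ i ∧ i.val + m.val + 2 ≤ k + 1).card := by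
    rw [SimpleGraph.degree_eq_sum_if_adj, Finset.sum_boole]
    congr 3
    ext m
    simp [ne_comm, hadj]
  rcases eq_or_ne i j with rfl | hij
  · simp [antiregLap, SimpleGraph.lapMatrix, SimpleGraph.degMatrix, hdeg]
  · simp only [antiregLap, of_apply, hij, if_false, hadj, SimpleGraph.lapMatrix,
      SimpleGraph.degMatrix, Matrix.sub_apply, diagonal_apply_ne _ hij, SimpleGraph.adjMatrix_apply,
      antiregularGraph_adj, ne_eq, not_false_eq_true, true_and]
    split_ifs <;> simp

lemma antiregLap_isSymm (k : ℕ) : (antiregLap k).IsSymm :=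
  antiregLap_eq_lapMatrix k ▸ (antiregularGraph k).isSymm_lapMatrix ℝ

lemma antiregLap_mulVec_one (k : ℕ) : antiregLap k *ᵥ 1 = 0 :=
  antiregLap_eq_lapMatrix k ▸ (antiregularGraph k).lapMatrix_mulVec_const_eq_zero

lemma antiregLap_vecMul_one (k : ℕ) : 1 ᵥ* antiregLap k = 0 := by
  rw [← mulVec_transpose, antiregLap_isSymm, antiregLap_mulVec_one]

/-- The summand `j = i` need not be excluded, because it vanishes. -/
lemma antiregLap_mulVec_apply_s10 (k : ℕ) (x : Fin k → ℝ) (i : Fin k) :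
    (antiregLap k *ᵥ x) i = ∑ j : Fin k, if i.val + j.val < k then x i - x j else 0 := by
  rw [antiregLap_eq_lapMatrix, SimpleGraph.lapMatrix_mulVec_apply,
    SimpleGraph.degree_eq_sum_if_adj, Finset.sum_mul, SimpleGraph.neighborFinset_eq_filter,
    Finset.sum_filter, ← Finset.sum_sub_distrib]
  refine Finset.sum_congr rfl fun j _ => ?_
  rcases eq_or_ne i j with rfl | hij
  · simp
  · simp only [antiregularGraph_adj, ne_eq, hij, not_false_eq_true, true_and]
    split_ifs <;> simp

variable {k : ℕ}

lemma antiregLap_mulVec_zero (x : Fin (k + 2) → ℝ) :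
    (antiregLap (k + 2) *ᵥ x) 0 = (k + 2) * x 0 - ∑ i, x i := by
  simp [antiregLap_mulVec_apply_s10]

lemma antiregLap_mulVec_castSucc_succ (x : Fin (k + 2) → ℝ) (i : Fin k) :
    (antiregLap (k + 2) *ᵥ x) i.castSucc.succ =
      (antiregLap k *ᵥ Fin.init (Fin.tail x)) i + x i.castSucc.succ - x 0 := by
  have hadj (j : Fin k) : i.val + 1 + (j.val + 1) < k + 2 ↔ i.val + j.val < k := by omega
  rw [antiregLap_mulVec_apply_s10, Fin.sum_univ_succ, Fin.sum_univ_castSucc, antiregLap_mulVec_apply_s10]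
  have hlast : ¬ i.val + 1 + (k + 1) < k + 2 := by omega
  simp only [Fin.val_succ, Fin.val_castSucc, Fin.val_zero, Fin.val_last, Fin.succ_last, add_zero,
    hadj, hlast, if_false, Fin.init, Fin.tail, if_pos (show i.val + 1 < k + 2 by omega)]
  ring

lemma antiregLap_mulVec_last (x : Fin (k + 2) → ℝ) :
    (antiregLap (k + 2) *ᵥ x) (Fin.last (k + 1)) = x (Fin.last (k + 1)) - x 0 := by
  have hadj (j : Fin (k + 1)) : ¬ k + 1 + (j.val + 1) < k + 2 := by omega
  rw [antiregLap_mulVec_apply_s10, Fin.sum_univ_succ]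
  simp [hadj]

/-- The vertex `κ̄` of the antiregular graph, the one of the two vertices of equal degree that has
the smaller index. -/
def repeatedVertex (k : ℕ) [NeZero k] : Fin k :=
  ⟨(k + 1) / 2 - 1, by have := NeZero.pos k; omega⟩

lemma repeatedVertex_add_two (k : ℕ) [NeZero k] :
    repeatedVertex (k + 2) = (repeatedVertex k).castSucc.succ := by
  have := NeZero.pos k
  ext
  simp only [repeatedVertex, Fin.val_succ, Fin.val_castSucc]
  omega

section Middle

variable {x : Fin (k + 2) → ℝ} {l : ℝ}

lemma mulVec_init_tail_of_middle_rows (h : ∀ i : Fin k,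
      (antiregLap (k + 2) *ᵥ x) i.castSucc.succ = l * x i.castSucc.succ) :
    antiregLap k *ᵥ Fin.init (Fin.tail x)
      = (l - 1) • Fin.init (Fin.tail x) + Function.const (Fin k) (x 0) := by
  ext i
  have hi := h i
  rw [antiregLap_mulVec_castSucc_succ] at hi
  simp only [Pi.add_apply, Pi.smul_apply, smul_eq_mul, Function.const_apply, Fin.init, Fin.tail]
    at hi ⊢
  linear_combination hi

variable [NeZero k]

lemma apply_zero_eq_of_middle_rows (h : ∀ i : Fin k,
      (antiregLap (k + 2) *ᵥ x) i.castSucc.succ = l * x i.castSucc.succ) :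
    x 0 = (1 - l) * 𝔼 i, Fin.init (Fin.tail x) i := by
  rw [eq_neg_mul_expect_of_mulVec_eq_smul_add_const (antiregLap_vecMul_one k)
    (mulVec_init_tail_of_middle_rows h)]
  ring

lemma mulVec_balance_of_middle_rows (h : ∀ i : Fin k,
      (antiregLap (k + 2) *ᵥ x) i.castSucc.succ = l * x i.castSucc.succ) :
    antiregLap k *ᵥ balance (Fin.init (Fin.tail x))
      = (l - 1) • balance (Fin.init (Fin.tail x)) :=
  mulVec_balance_of_mulVec_eq_smul_add_const (antiregLap_mulVec_one k) (antiregLap_vecMul_one k)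
    (mulVec_init_tail_of_middle_rows h)

end Middle

section ZeroSum

variable {x : Fin (k + 2) → ℝ} {l : ℝ}

lemma apply_zero_eq_zero_or_of_sum_eq_zero (hx : antiregLap (k + 2) *ᵥ x = l • x)
    (hsum : ∑ i, x i = 0) : x 0 = 0 ∨ l = k + 2 := by
  have hrow := congrFun hx 0
  rw [antiregLap_mulVec_zero, hsum, Pi.smul_apply, smul_eq_mul] at hrow
  have hmul : x 0 * (l - (k + 2)) = 0 := by linear_combination -hrow
  exact (mul_eq_zero.1 hmul).imp_right sub_eq_zero.1

lemma expect_ne_zero_and_eigenvalue_eq_of_balance_eq_zero [NeZero k]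
    (hx : antiregLap (k + 2) *ᵥ x = l • x) (hsum : ∑ i, x i = 0) (hne : x ≠ 0)
    (hconst : balance (Fin.init (Fin.tail x)) = 0) :
    𝔼 i, Fin.init (Fin.tail x) i ≠ 0 ∧ (l = 1 ∨ l = k + 2) := by
  have hfirst := apply_zero_eq_of_middle_rows fun i => congrFun hx i.castSucc.succ
  have hmean : 𝔼 i, Fin.init (Fin.tail x) i ≠ 0 := by
    intro hmean
    rw [hmean, mul_zero] at hfirst
    refine hne (eq_zero_of_init_tail_eq_zero hfirst ?_ hsum)
    rw [sub_eq_zero.1 hconst, hmean, Function.const_zero]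
  refine ⟨hmean, (apply_zero_eq_zero_or_of_sum_eq_zero hx hsum).imp_left fun h0 => ?_⟩
  rw [h0, zero_eq_mul] at hfirst
  linarith [hfirst.resolve_right hmean]

end ZeroSum

theorem antiregLap_eigenvalue_mem_Icc_and_apply_repeatedVertex_ne_zero (k : ℕ)
    [hk : NeZero k] {x : Fin k → ℝ} {l : ℝ} (hx : antiregLap k *ᵥ x = l • x)
    (hsum : ∑ i, x i = 0) (hne : x ≠ 0) :
    l ∈ Set.Icc 1 (k : ℝ) ∧ x (repeatedVertex k) ≠ 0 := by
  induction k using Nat.twoStepInduction generalizing hk l with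
  | zero => exact absurd rfl hk.out
  | one => exact absurd (funext fun i => by rw [Subsingleton.elim i 0]; simpa using hsum) hne
  | more k ih _ =>
    rcases k.eq_zero_or_pos with rfl | hpos
    · have h0 : x 0 ≠ 0 := fun h0 =>
        hne (eq_zero_of_init_tail_eq_zero h0 (Subsingleton.elim _ _) hsum)
      have hl := (apply_zero_eq_zero_or_of_sum_eq_zero hx hsum).resolve_left h0
      exact ⟨by norm_num [hl], h0⟩
    have : NeZero k := ⟨hpos.ne'⟩
    rw [repeatedVertex_add_two]
    set u := Fin.init (Fin.tail x) with hu
    have hmid : x (repeatedVertex k).castSucc.succ = balance u (repeatedVertex k) + 𝔼 i, u i := by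
      simp [Fintype.balance_apply, hu, Fin.init, Fin.tail]
    rw [hmid]
    by_cases hconst : balance u = 0
    · obtain ⟨hmean, hl⟩ := expect_ne_zero_and_eigenvalue_eq_of_balance_eq_zero hx hsum hne hconst
      refine ⟨?_, by simpa [hconst] using hmean⟩
      rcases hl with rfl | rfl <;> constructor <;> push_cast <;> linarith [k.cast_nonneg (α := ℝ)]
    · have hrows (i : Fin k) := congrFun hx i.castSucc.succ
      obtain ⟨⟨hl1, hlk⟩, hκ⟩ :=
        ih (mulVec_balance_of_middle_rows hrows) (Fintype.sum_balance u) hconst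
      have h0 : x 0 = 0 :=
        (apply_zero_eq_zero_or_of_sum_eq_zero hx hsum).resolve_right (by linarith)
      have hmean : 𝔼 i, u i = 0 := by
        have hfirst := apply_zero_eq_of_middle_rows hrows
        rw [h0, zero_eq_mul] at hfirst
        exact hfirst.resolve_left (by linarith)
      refine ⟨⟨by linarith, by push_cast; linarith⟩, by rwa [hmean, add_zero]⟩

theorem antiregLap_isControllable (k : ℕ) [NeZero k] :
    IsControllable (antiregLap k) (Pi.single (repeatedVertex k) 1) := by
  rw [isControllable_iff_forall_eigenvector (antiregLap_isSymm k)]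
  intro l x hx hκ
  rw [dotProduct_single_one] at hκ
  have hx' : antiregLap k *ᵥ x = l • x + Function.const (Fin k) 0 := by simpa using hx
  have hcol := antiregLap_vecMul_one k
  have hmean : l = 0 ∨ 𝔼 i, x i = 0 := by
    simpa using eq_neg_mul_expect_of_mulVec_eq_smul_add_const hcol hx'
  refine eq_zero_of_balance_eq_zero (by_contra fun hconst => ?_) hκ
  obtain ⟨⟨hl, -⟩, hne⟩ := antiregLap_eigenvalue_mem_Icc_and_apply_repeatedVertex_ne_zero k
    (mulVec_balance_of_mulVec_eq_smul_add_const (antiregLap_mulVec_one k) hcol hx')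
    (Fintype.sum_balance x) hconst
  have hzero : 𝔼 i, x i = 0 := hmean.resolve_left (by linarith)
  exact hne (by rw [Fintype.balance_apply, hκ, hzero, sub_zero])

lemma antiregLap_mulVec_cons_snoc_zero {u : Fin k → ℝ} {l : ℝ}
    (hu : antiregLap k *ᵥ u = l • u) (hsum : ∑ i, u i = 0) :
    antiregLap (k + 2) *ᵥ Fin.cons (α := fun _ => ℝ) 0 (Fin.snoc (α := fun _ => ℝ) u 0)
      = (l + 1) • Fin.cons (α := fun _ => ℝ) 0 (Fin.snoc (α := fun _ => ℝ) u 0) := by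
  ext i
  induction i using Fin.cases with
  | zero =>
    rw [antiregLap_mulVec_zero, Fin.sum_univ_succ, Fin.sum_univ_castSucc]
    simp [hsum]
  | succ i => induction i using Fin.lastCases with
    | last =>
      rw [Fin.succ_last, antiregLap_mulVec_last, ← Fin.succ_last]
      simp
    | cast i =>
      rw [antiregLap_mulVec_castSucc_succ, Fin.tail_cons, Fin.init_snoc, hu]
      simp only [Pi.smul_apply, smul_eq_mul, Fin.cons_succ, Fin.cons_zero, Fin.snoc_castSucc]
      ring

lemma exists_antiregLap_eigenvector_last_eq_zero {x : Fin (k + 2) → ℝ} {l : ℝ}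
    (hx : ∀ i ≠ Fin.last (k + 1), (antiregLap (k + 2) *ᵥ x) i = l * x i)
    (hκ : x (repeatedVertex (k + 2)) = 0) (hne : x ≠ 0) :
    ∃ v : Fin (k + 2) → ℝ, v ≠ 0 ∧ antiregLap (k + 2) *ᵥ v = l • v ∧ v (Fin.last (k + 1)) = 0 := by
  have hrows (i : Fin k) := hx i.castSucc.succ (by simp [← Fin.succ_last])
  have hsum (h0 : x 0 = 0) : ∑ i, x i = 0 := by
    have hfirst := hx 0 (by simp [Fin.ext_iff])
    rw [antiregLap_mulVec_zero, h0] at hfirst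
    linarith
  rcases k.eq_zero_or_pos with rfl | hpos
  · exact absurd (eq_zero_of_init_tail_eq_zero hκ (Subsingleton.elim _ _) (hsum hκ)) hne
  have : NeZero k := ⟨hpos.ne'⟩
  set u := Fin.init (Fin.tail x) with hu
  have hconst : balance u ≠ 0 := by
    intro hconst
    have huκ : u (repeatedVertex k) = 0 := by rwa [repeatedVertex_add_two] at hκ
    have hu0 : u = 0 := eq_zero_of_balance_eq_zero hconst huκ
    have h0 : x 0 = 0 := by rw [apply_zero_eq_of_middle_rows hrows, ← hu, hu0]; simp
    exact hne (eq_zero_of_init_tail_eq_zero h0 hu0 (hsum h0))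
  have hext := antiregLap_mulVec_cons_snoc_zero (mulVec_balance_of_middle_rows hrows)
    (Fintype.sum_balance u)
  rw [sub_add_cancel] at hext
  refine ⟨_, fun hv => hconst ?_, hext, by simp [← Fin.succ_last]⟩
  ext i
  simpa using congrFun hv i.castSucc.succ

end Antiregular

section Interconnection

lemma zvec_eq_chainLink (n k : ℕ) (hk : 2 ≤ k + 2) (p : Fin n) :
    zvec (n + 1) (k + 2) hk p = chainLink (repeatedVertex (k + 2)) (Fin.last (k + 1)) p := by
  ext q
  simp only [zvec, chainLink, Pi.sub_apply, Pi.single_apply]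
  rfl

lemma interLap_eq_chainLap (n k : ℕ) (hk : 2 ≤ k + 2) :
    interLap (n + 1) (k + 2) hk =
      chainLap n (antiregLap (k + 2)) (repeatedVertex (k + 2)) (Fin.last (k + 1)) := by
  simp only [interLap, copiesLap, chainLap, ← zvec_eq_chainLink n k hk]
  rfl

end Interconnection

/-- Corollary: generalized path controllability.  The graph
obtained by interconnecting `n` copies of the `k`-vertex antiregular graph
(terminal vertex of each copy joined to the degree-repeating vertex `κ̄ = ⌈k/2⌉`
of the next copy) is Laplacian controllable by a single input connected to the
degree-repeating vertex `κ̄` of the first copy. -/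
theorem interLap_controllable (k n : ℕ) (hk : 2 ≤ k) (hn : 1 ≤ n) :
    IsControllable (interLap n k hk)
      (fun q => if q = ((⟨0, hn⟩ : Fin n), (⟨(k + 1) / 2 - 1, by omega⟩ : Fin k))
        then (1 : ℝ) else 0) := by
  obtain ⟨n, rfl⟩ := Nat.exists_eq_add_of_le' hn
  obtain ⟨k, rfl⟩ := Nat.exists_eq_add_of_le' hk
  have hinput : (fun q => if q = (0, repeatedVertex (k + 2)) then (1 : ℝ) else 0) =
      Pi.single ((0 : Fin (n + 1)), repeatedVertex (k + 2)) 1 :=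
    funext fun q => (Pi.single_apply _ _ q).symm
  have hchain : IsControllable (interLap (n + 1) (k + 2) hk) (Pi.single (0, repeatedVertex _) 1) :=
    interLap_eq_chainLap n k hk ▸ IsControllable.chainLap (antiregLap_isSymm (k + 2))
      (antiregLap_isControllable (k + 2)) (fun _ _ => exists_antiregLap_eigenvector_last_eq_zero) n
  exact hinput ▸ hchain
end
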